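/- Let I be a compact interval and w : ℝ → [0,1] integrable. Then 1 is not an eigenvalue of the operator χ_I K_w χ_I on L²(ℝ): if χ_I K_w χ_I f = f for f ∈ L²(ℝ), then f = 0. -/

import Mathlib

open MeasureTheory

/-!
The quadratic form of the Fourier multiplier `K_w` is `⟪f, K_w f⟫ = ∫ w |𝓕 f|²`, while
`⟪f, f⟫ = ∫ |𝓕 f|²` by Plancherel. If `f` is supported in a bounded set on which `K_w f = f`, the
two agree, so `∫ (1 - w) |𝓕 f|² = 0` and, as `w ≤ 1`, `w = 1` almost everywhere on `{𝓕 f ≠ 0}`.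
The Fourier transform of a function with bounded support extends to an entire function, so if
`𝓕 f ≠ 0` then `{𝓕 f ≠ 0}` is conull and `w = 1` almost everywhere, which is impossible for an
integrable `w`.
-/

open Filter Set
open scoped FourierTransform ComplexInnerProductSpace

section FourierTransform

variable {V E F : Type*} [NormedAddCommGroup V] [InnerProductSpace ℝ V] [FiniteDimensional ℝ V]
  [MeasurableSpace V] [BorelSpace V] [NormedAddCommGroup E] [NormedSpace ℂ E]
  [NormedAddCommGroup F] [InnerProductSpace ℂ F] [CompleteSpace F]

lemma continuous_fourier_of_integrable {f : V → E} (hf : Integrable f) : Continuous (𝓕 f) :=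
  VectorFourier.fourierIntegral_continuous Real.continuous_fourierChar
    (by exact continuous_inner) hf

lemma norm_fourier_le_integral_norm (f : V → E) (u : V) : ‖𝓕 f u‖ ≤ ∫ x, ‖f x‖ :=
  VectorFourier.norm_fourierIntegral_le_integral_norm _ _ _ _ _

lemma integral_fourier_smul_eq_of_integrable [CompleteSpace E] {f : V → ℂ} {g : V → E}
    (hf : Integrable f) (hg : Integrable g) : ∫ u, 𝓕 f u • g u = ∫ x, f x • 𝓕 g x := by
  have h := VectorFourier.integral_fourierIntegral_smul_eq_flip (L := innerₗ V)
    Real.continuous_fourierChar (by exact continuous_inner) hf hg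
  rwa [flip_innerₗ] at h

lemma integral_inner_fourierInv_eq_of_integrable {f g : V → F}
    (hf : Integrable f) (hg : Integrable g) : ∫ x, ⟪f x, 𝓕⁻ g x⟫ = ∫ u, ⟪𝓕 f u, g u⟫ := by
  have h := VectorFourier.integral_sesq_fourierIntegral_eq_neg_flip (L := innerₗ V) (innerSL ℂ)
    Real.continuous_fourierChar (by exact continuous_inner) hf hg
  rw [flip_innerₗ] at h
  exact h.symm

lemma fourier_fourierChar_smul (f : V → E) (x y : V) :
    𝓕 (fun u ↦ Real.fourierChar (inner ℝ u x) • f u) y = 𝓕⁻ f (x - y) := by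
  rw [Real.fourier_eq, Real.fourierInv_eq]
  congr with u
  rw [smul_smul, ← AddChar.map_add_eq_mul, inner_sub_right, neg_add_eq_sub]

theorem coeFn_fourier_ae_eq_of_integrable (f : Lp F 2 (volume : Measure V)) (hf : Integrable f) :
    (𝓕 f : Lp F 2 (volume : Measure V)) =ᵐ[volume] 𝓕 (f : V → F) := by
  refine ae_eq_of_integral_contDiff_smul_eq ((Lp.memLp _).locallyIntegrable one_le_two)
    (continuous_fourier_of_integrable hf).locallyIntegrable fun g hg hgc ↦ ?_
  have hgc' : HasCompactSupport (Complex.ofRealCLM ∘ g) := hgc.comp_left rfl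
  set G := hgc'.toSchwartzMap (by fun_prop) with hG
  have hdistrib := congrArg (fun T ↦ T G) (Lp.fourier_toTemperedDistribution_eq f)
  simp only [TemperedDistribution.fourier_apply, Lp.toTemperedDistribution_apply] at hdistrib
  have hflip : ∫ x, G x • (𝓕 f : Lp F 2 (volume : Measure V)) x = ∫ x, G x • 𝓕 (f : V → F) x :=
    hdistrib.symm.trans (integral_fourier_smul_eq_of_integrable G.integrable hf)
  simpa [hG] using hflip

lemma fourier_toLp_ae_eq {f : V → F} (hf : Integrable f) (hf₂ : MemLp f 2) :
    (𝓕 (hf₂.toLp f) : Lp F 2 (volume : Measure V)) =ᵐ[volume] 𝓕 f := by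
  refine (coeFn_fourier_ae_eq_of_integrable _ (hf.congr hf₂.coeFn_toLp.symm)).trans ?_
  exact .of_eq (funext (Real.fourier_congr_ae hf₂.coeFn_toLp))

theorem memLp_two_fourier {f : V → F} (hf : Integrable f) (hf₂ : MemLp f 2) : MemLp (𝓕 f) 2 :=
  (memLp_congr_ae (fourier_toLp_ae_eq hf hf₂)).1 (Lp.memLp _)

theorem integral_inner_fourier_fourier {f g : V → F} (hf : Integrable f) (hf₂ : MemLp f 2)
    (hg : Integrable g) (hg₂ : MemLp g 2) : ∫ u, ⟪𝓕 f u, 𝓕 g u⟫ = ∫ x, ⟪f x, g x⟫ := by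
  have h := Lp.inner_fourier_eq (hf₂.toLp f) (hg₂.toLp g)
  simp only [L2.inner_def] at h
  convert h using 1 <;> refine integral_congr_ae ?_
  · filter_upwards [fourier_toLp_ae_eq hf hf₂, fourier_toLp_ae_eq hg hg₂] with u hfu hgu
    rw [hfu, hgu]
  · filter_upwards [hf₂.coeFn_toLp, hg₂.coeFn_toLp] with x hfx hgx
    rw [hfx, hgx]

theorem ae_eq_zero_of_fourier_eq_zero {f : V → F} (hf : Integrable f) (hf₂ : MemLp f 2)
    (h : 𝓕 f = 0) : f =ᵐ[volume] 0 := by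
  have hLp : (𝓕 (hf₂.toLp f) : Lp F 2 (volume : Measure V)) = 0 :=
    Lp.eq_zero_iff_ae_eq_zero.2 (h ▸ fourier_toLp_ae_eq hf hf₂)
  rw [← norm_eq_zero, Lp.norm_fourier_eq, norm_eq_zero, Lp.eq_zero_iff_ae_eq_zero] at hLp
  exact hf₂.coeFn_toLp.symm.trans hLp

end FourierTransform

section Multiplier

variable {V E F : Type*} [NormedAddCommGroup V] [InnerProductSpace ℝ V] [FiniteDimensional ℝ V]
  [MeasurableSpace V] [BorelSpace V] [NormedAddCommGroup E] [NormedSpace ℂ E]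
  [NormedAddCommGroup F] [InnerProductSpace ℂ F] [CompleteSpace F]
  {w : V → ℝ}

/-- The Fourier multiplier `K_w f = 𝓕⁻ (w · 𝓕 f)` with real symbol `w`, as an operator on functions
rather than on `L²`; it is given by Fourier integrals, and so is meaningful for integrable `w` and
`f`. -/
noncomputable def fourierMultiplierFun (w : V → ℝ) (f : V → E) : V → E :=
  𝓕⁻ fun u ↦ (w u : ℂ) • 𝓕 f u

lemma integrable_smul_fourier (hw : Integrable w) {f : V → E} (hf : Integrable f) :
    Integrable fun u ↦ (w u : ℂ) • 𝓕 f u :=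
  hw.ofReal.smul_bdd (∫ x, ‖f x‖) (continuous_fourier_of_integrable hf).aestronglyMeasurable
    (.of_forall (norm_fourier_le_integral_norm f))

theorem fourierMultiplierFun_apply [CompleteSpace E] (hw : Integrable w) {f : V → E}
    (hf : Integrable f) (x : V) :
    fourierMultiplierFun w f x = ∫ y, 𝓕⁻ (fun u ↦ (w u : ℂ)) (x - y) • f y := by
  have hmod : Integrable fun u ↦ Real.fourierChar (inner ℝ u x) • (w u : ℂ) := by
    simpa using (Real.fourierIntegral_convergent_iff (-x)).2 hw.ofReal
  calc fourierMultiplierFun w f x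
    _ = ∫ u, (Real.fourierChar (inner ℝ u x) • (w u : ℂ)) • 𝓕 f u := by
      simp_rw [fourierMultiplierFun, Real.fourierInv_eq, smul_assoc]
    _ = ∫ y, 𝓕 (fun u ↦ Real.fourierChar (inner ℝ u x) • (w u : ℂ)) y • f y :=
      (integral_fourier_smul_eq_of_integrable hmod hf).symm
    _ = ∫ y, 𝓕⁻ (fun u ↦ (w u : ℂ)) (x - y) • f y := by
      simp_rw [fourier_fourierChar_smul]

lemma fourierMultiplierFun_eq_setIntegral [CompleteSpace E] {w : ℝ → ℝ} (hw : Integrable w)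
    {f : ℝ → E} (hf : Integrable f) {s : Set ℝ} (hfs : ∀ᵐ x, x ∉ s → f x = 0) (x : ℝ) :
    fourierMultiplierFun w f x = ∫ y in s,
      (∫ u : ℝ, Complex.exp (2 * Real.pi * Complex.I * (x - y) * u) * w u) • f y := by
  rw [fourierMultiplierFun_apply hw hf, setIntegral_eq_integral_of_ae_compl_eq_zero
    (hfs.mono fun y hy hys ↦ by rw [hy hys, smul_zero])]
  congr with y
  rw [Real.fourierInv_eq']
  congr with u
  simp only [smul_eq_mul, RCLike.inner_apply, conj_trivial]
  push_cast
  ring_nf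

theorem integral_inner_fourierMultiplierFun (hw : Integrable w) {f : V → F} (hf : Integrable f) :
    ∫ x, ⟪f x, fourierMultiplierFun w f x⟫ = ((∫ u, w u * ‖𝓕 f u‖ ^ 2 : ℝ) : ℂ) := by
  rw [fourierMultiplierFun,
    integral_inner_fourierInv_eq_of_integrable hf (integrable_smul_fourier hw hf),
    ← integral_complex_ofReal]
  simp [inner_self_eq_norm_sq_to_K]

theorem ae_eq_one_of_fourierMultiplierFun_eq_self (hw : Integrable w) (hw_le : ∀ᵐ u, w u ≤ 1)
    {f : V → F} (hf : Integrable f) (hf₂ : MemLp f 2)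
    (hfix : ∀ᵐ x, f x ≠ 0 → fourierMultiplierFun w f x = f x) :
    ∀ᵐ u, 𝓕 f u ≠ 0 → w u = 1 := by
  have hF : Integrable fun u ↦ ‖𝓕 f u‖ ^ 2 :=
    (memLp_two_fourier hf hf₂).integrable_norm_pow two_ne_zero
  have hwF : Integrable fun u ↦ w u * ‖𝓕 f u‖ ^ 2 := by
    refine hw.mul_bdd (c := (∫ x, ‖f x‖) ^ 2) hF.1 (.of_forall fun u ↦ ?_)
    rw [norm_pow, norm_norm]
    gcongr
    exact norm_fourier_le_integral_norm f u
  have hform : ∫ u, w u * ‖𝓕 f u‖ ^ 2 = ∫ u, ‖𝓕 f u‖ ^ 2 := by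
    apply Complex.ofReal_injective
    calc ((∫ u, w u * ‖𝓕 f u‖ ^ 2 : ℝ) : ℂ)
      _ = ∫ x, ⟪f x, fourierMultiplierFun w f x⟫ :=
        (integral_inner_fourierMultiplierFun hw hf).symm
      _ = ∫ x, ⟪f x, f x⟫ := by
        refine integral_congr_ae ?_
        filter_upwards [hfix] with x hx
        by_cases hfx : f x = 0
        · simp [hfx]
        · rw [hx hfx]
      _ = ∫ u, ⟪𝓕 f u, 𝓕 f u⟫ := (integral_inner_fourier_fourier hf hf₂ hf hf₂).symm
      _ = ((∫ u, ‖𝓕 f u‖ ^ 2 : ℝ) : ℂ) := by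
        rw [← integral_complex_ofReal]
        simp [inner_self_eq_norm_sq_to_K]
  have heq : (fun u ↦ w u * ‖𝓕 f u‖ ^ 2) =ᵐ[volume] fun u ↦ ‖𝓕 f u‖ ^ 2 := by
    refine (integral_eq_iff_of_ae_le hwF hF ?_).1 hform
    filter_upwards [hw_le] with u hu using mul_le_of_le_one_left (sq_nonneg _) hu
  filter_upwards [heq] with u hu hne
  exact (mul_eq_right₀ (by simpa using hne)).1 hu

end Multiplier

section EntireExtension

variable {α E : Type*} [MeasurableSpace α] {μ : Measure α} [NormedAddCommGroup E] [NormedSpace ℂ E]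

theorem differentiable_integral_cexp_mul_smul {g : α → ℂ} {C : ℝ} {f : α → E}
    (hg : AEStronglyMeasurable g μ) (hgC : ∀ᵐ a ∂μ, ‖g a‖ ≤ C) (hf : Integrable f μ) :
    Differentiable ℂ fun z : ℂ ↦ ∫ a, Complex.exp (z * g a) • f a ∂μ := by
  intro z₀
  have hexp_meas (z : ℂ) : AEStronglyMeasurable (fun a ↦ Complex.exp (z * g a)) μ :=
    Complex.continuous_exp.comp_aestronglyMeasurable (hg.const_mul z)
  have hexp_le {a : α} (ha : ‖g a‖ ≤ C) (z : ℂ) : ‖Complex.exp (z * g a)‖ ≤ Real.exp (‖z‖ * C) := by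
    refine (Complex.norm_exp_le_exp_norm _).trans (Real.exp_le_exp.2 ?_)
    rw [norm_mul]
    gcongr
  refine (hasDerivAt_integral_of_dominated_loc_of_deriv_le (𝕜 := ℂ)
    (F' := fun z a ↦ (Complex.exp (z * g a) * g a) • f a)
    (bound := fun a ↦ Real.exp ((‖z₀‖ + 1) * C) * C * ‖f a‖)
    (Metric.ball_mem_nhds z₀ one_pos) ?_ ?_ ?_ ?_ ?_ ?_).2.differentiableAt
  · exact .of_forall fun z ↦ (hexp_meas z).smul hf.1
  · exact hf.bdd_smul (Real.exp (‖z₀‖ * C)) (hexp_meas z₀) (hgC.mono fun a ha ↦ hexp_le ha z₀)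
  · exact ((hexp_meas z₀).mul hg).smul hf.1
  · filter_upwards [hgC] with a ha z hz
    have hC : 0 ≤ C := (norm_nonneg _).trans ha
    have hz : ‖z‖ ≤ ‖z₀‖ + 1 := by
      have := norm_le_norm_add_norm_sub' z z₀
      rw [mem_ball_iff_norm] at hz
      linarith
    rw [norm_smul, norm_mul]
    gcongr
    exact (hexp_le ha z).trans (by gcongr)
  · exact hf.norm.const_mul _
  · refine .of_forall fun a z _ ↦ HasDerivAt.smul_const ?_ _
    simpa using ((hasDerivAt_id z).mul_const (g a)).cexp

theorem analyticOnNhd_fourier_of_isBounded [CompleteSpace E] {f : ℝ → E} (hf : Integrable f)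
    {s : Set ℝ} (hs : Bornology.IsBounded s) (hfs : ∀ᵐ x, x ∉ s → f x = 0) :
    AnalyticOnNhd ℝ (𝓕 f) univ := by
  obtain ⟨R, hsR⟩ := hs.subset_closedBall 0
  set B : Set ℝ := Metric.closedBall 0 R
  let G (z : ℂ) : E := ∫ x in B, Complex.exp (z * (-2 * Real.pi * x * Complex.I)) • f x
  have hG : Differentiable ℂ G := by
    refine differentiable_integral_cexp_mul_smul (C := 2 * Real.pi * R)
      (Continuous.aestronglyMeasurable (by fun_prop)) ?_ hf.integrableOn
    filter_upwards [ae_restrict_mem Metric.isClosed_closedBall.measurableSet] with x hx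
    rw [mem_closedBall_zero_iff, Real.norm_eq_abs] at hx
    calc ‖(-2 * Real.pi * x * Complex.I : ℂ)‖
      _ = 2 * Real.pi * |x| := by simp [abs_of_pos Real.pi_pos]
      _ ≤ 2 * Real.pi * R := by gcongr
  have hFG : 𝓕 f = fun u : ℝ ↦ G u := by
    ext u
    have hfB : ∀ᵐ x, x ∉ B → f x = 0 := hfs.mono fun x hx hxB ↦ hx (mt (@hsR x) hxB)
    rw [Real.fourier_real_eq_integral_exp_smul,
      ← setIntegral_eq_integral_of_ae_compl_eq_zero (s := B)
        (hfB.mono fun x hx hxB ↦ by rw [hx hxB, smul_zero])]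
    congr with x
    push_cast
    ring_nf
  rw [hFG]
  exact fun u _ ↦ ((hG.analyticAt u).restrictScalars (𝕜 := ℝ)).fun_comp
    (Complex.ofRealCLM.analyticAt u)

end EntireExtension

theorem eq_zero_or_ae_ne_zero_of_analyticOnNhd {E : Type*} [NormedAddCommGroup E]
    [NormedSpace ℝ E] {f : ℝ → E} (hf : AnalyticOnNhd ℝ f univ) : f = 0 ∨ ∀ᵐ x, f x ≠ 0 := by
  refine or_iff_not_imp_left.2 fun hne ↦ ?_
  obtain ⟨x, hx⟩ := Function.ne_iff.1 hne
  have h := ae_restrict_le_codiscreteWithin (μ := volume) MeasurableSet.univ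
    (hf.preimage_zero_mem_codiscrete hx)
  rwa [Measure.restrict_univ] at h

lemma not_ae_eq_one_of_integrable {α : Type*} [MeasurableSpace α] {μ : Measure α}
    (hμ : μ univ = ⊤) {w : α → ℝ} (hw : Integrable w μ) : ¬ ∀ᵐ a ∂μ, w a = 1 := by
  intro h
  have hone : Integrable (fun _ ↦ (1 : ℝ)) μ := hw.congr h
  rw [integrable_const_iff_isFiniteMeasure one_ne_zero] at hone
  exact measure_ne_top μ univ hμ

lemma integrable_of_memLp_of_isBounded {X E : Type*} [PseudoMetricSpace X] [ProperSpace X]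
    [MeasurableSpace X] {μ : Measure X} [IsFiniteMeasureOnCompacts μ] [NormedAddCommGroup E]
    {f : X → E} {p : ENNReal} (hp : 1 ≤ p) (hf : MemLp f p μ) {s : Set X}
    (hs : Bornology.IsBounded s) (hfs : ∀ᵐ x ∂μ, x ∉ s → f x = 0) : Integrable f μ := by
  have : IsFiniteMeasure (μ.restrict s) := isFiniteMeasure_restrict.2 hs.measure_lt_top.ne
  have hfs_on : IntegrableOn f s μ := (hf.restrict s).integrable hp
  exact hfs_on.integrable_of_ae_notMem_eq_zero hfs

theorem deformed_sine_kernel_one_not_eigenvalue_general {F : Type*} [NormedAddCommGroup F]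
    [InnerProductSpace ℂ F] [CompleteSpace F] {s : Set ℝ} (hs : Bornology.IsBounded s)
    {w : ℝ → ℝ} (hw : Integrable w) (hw_le : ∀ᵐ u, w u ≤ 1) {f : ℝ → F} (hf : MemLp f 2)
    (hfix : f =ᵐ[volume] s.indicator fun x ↦ ∫ y in s,
      (∫ u : ℝ, Complex.exp (2 * (Real.pi : ℂ) * Complex.I * ((x : ℂ) - (y : ℂ)) * (u : ℂ))
        * (w u : ℂ)) • f y) :
    f =ᵐ[volume] 0 := by
  have hfs : ∀ᵐ x, x ∉ s → f x = 0 := by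
    filter_upwards [hfix] with x hx hxs
    rw [hx, indicator_of_notMem hxs]
  have hf₁ : Integrable f := integrable_of_memLp_of_isBounded one_le_two hf hs hfs
  have hfixK : ∀ᵐ x, f x ≠ 0 → fourierMultiplierFun w f x = f x := by
    filter_upwards [hfix] with x hx hne
    rw [fourierMultiplierFun_eq_setIntegral hw hf₁ hfs, hx,
      indicator_of_mem (of_not_not fun hxs ↦ hne (by rw [hx, indicator_of_notMem hxs]))]
  have hw_one := ae_eq_one_of_fourierMultiplierFun_eq_self hw hw_le hf₁ hf hfixK
  rcases eq_zero_or_ae_ne_zero_of_analyticOnNhd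
    (analyticOnNhd_fourier_of_isBounded hf₁ hs hfs) with hzero | hne
  · exact ae_eq_zero_of_fourier_eq_zero hf₁ hf hzero
  · exact absurd (hne.mp hw_one) (not_ae_eq_one_of_integrable Real.volume_univ hw)

/-- For a compact interval `I = [a,b]` and integrable `w : ℝ → [0,1]`, `1` is not an
eigenvalue of the operator `χ_I K_w χ_I` on `L²(ℝ)`: if `χ_I K_w χ_I f = f`, then `f = 0`. -/
theorem deformed_sine_kernel_one_not_eigenvalue (a b : ℝ) (w : ℝ → ℝ)
    (hw : Integrable w) (hw01 : ∀ u, w u ∈ Set.Icc (0 : ℝ) 1)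
    (T : Lp ℂ 2 (volume : Measure ℝ) →L[ℂ] Lp ℂ 2 (volume : Measure ℝ))
    (hT : ∀ f : Lp ℂ 2 (volume : Measure ℝ),
      (T f : ℝ → ℂ) =ᵐ[volume] fun x =>
        Set.indicator (Set.Icc a b)
          (fun x' => ∫ y in Set.Icc a b,
            (∫ u : ℝ, Complex.exp (2 * (Real.pi : ℂ) * Complex.I * ((x' : ℂ) - (y : ℂ)) * (u : ℂ))
              * (w u : ℂ)) * f y) x) :
    ∀ f : Lp ℂ 2 (volume : Measure ℝ), T f = f → f = 0 := by
  intro f hTf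
  refine Lp.eq_zero_iff_ae_eq_zero.2 (deformed_sine_kernel_one_not_eigenvalue_general
    (Metric.isBounded_Icc a b) hw (.of_forall fun u ↦ (hw01 u).2) (Lp.memLp f) ?_)
  simpa only [hTf, smul_eq_mul] using hT f
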